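/- Let A be a commutative ring, B an A-algebra, M a B-module, and A' an A-algebra. If M is intrinsically of finite presentation over A, then the base change M ⊗_A A', viewed as a module over B ⊗_A A', is intrinsically of finite presentation over A'. -/

import Mathlib

/-- An `S`-module `N` is *intrinsically of finite presentation* over `R` if there exist an
`n : ℕ` and an `R`-algebra homomorphism `f : R[x₁, …, xₙ] → S` from a polynomial ring over `R`
such that `N`, viewed as an `R[x₁, …, xₙ]`-module via restriction of scalars along `f`, is
finitely presented. -/
def Module.IntrinsicallyFinitePresentation (R S N : Type*) [CommRing R] [CommRing S]
    [Algebra R S] [AddCommGroup N] [Module S N] : Prop :=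
  ∃ (n : ℕ) (f : MvPolynomial (Fin n) R →ₐ[R] S),
    letI : Module (MvPolynomial (Fin n) R) N := Module.compHom N f.toRingHom
    Module.FinitePresentation (MvPolynomial (Fin n) R) N

open TensorProduct

section BaseChange

variable (A A' B M : Type*) [CommRing A] [CommRing A'] [CommRing B]
  [Algebra A A'] [Algebra A B]
  [AddCommGroup M] [Module A M] [Module B M] [IsScalarTower A B M]

/-- `LinearMap.lTensor` as a ring homomorphism between endomorphism rings. -/
noncomputable def lTensorRingHom : Module.End A M →+* Module.End A (A' ⊗[A] M) where
  toFun f := f.lTensor A'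
  map_one' := LinearMap.lTensor_id A' M
  map_mul' f g := LinearMap.lTensor_comp A' f g
  map_zero' := LinearMap.lTensor_zero A'
  map_add' f g := LinearMap.lTensor_add A' f g

/-- The `B`-module structure on the base change `A' ⊗[A] M`, where `B` acts through the
second tensor factor: `b • (a' ⊗ m) = a' ⊗ (b • m)`. -/
noncomputable def Module.tensorProductRight : Module B (A' ⊗[A] M) :=
  Module.compHom _ ((lTensorRingHom A A' M).comp (Module.toModuleEnd A M))

lemma tensorProductRight_isScalarTower :
    letI : Module B (A' ⊗[A] M) := Module.tensorProductRight A A' B M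
    IsScalarTower A B (A' ⊗[A] M) := by
  letI : Module B (A' ⊗[A] M) := Module.tensorProductRight A A' B M
  have key : ∀ (c : B) (a' : A') (x : M), c • (a' ⊗ₜ[A] x) = a' ⊗ₜ[A] (c • x) := by
    intro c a' x
    show (LinearMap.lTensor A' ((Module.toModuleEnd A M) c)) (a' ⊗ₜ[A] x) = a' ⊗ₜ[A] (c • x)
    simp
  refine ⟨fun a c z => ?_⟩
  induction z with
  | zero => simp only [smul_zero]
  | tmul a' x => simp only [key, smul_assoc, tmul_smul]
  | add u v hu hv => simp only [smul_add, hu, hv]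

lemma tensorProductRight_smulCommClass :
    letI : Module B (A' ⊗[A] M) := Module.tensorProductRight A A' B M
    SMulCommClass A' B (A' ⊗[A] M) := by
  letI : Module B (A' ⊗[A] M) := Module.tensorProductRight A A' B M
  have key : ∀ (c : B) (a' : A') (x : M), c • (a' ⊗ₜ[A] x) = a' ⊗ₜ[A] (c • x) := by
    intro c a' x
    show (LinearMap.lTensor A' ((Module.toModuleEnd A M) c)) (a' ⊗ₜ[A] x) = a' ⊗ₜ[A] (c • x)
    simp
  refine ⟨fun a' c z => ?_⟩
  induction z with
  | zero => simp only [smul_zero]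
  | tmul a'' x => simp only [key, smul_tmul']
  | add u v hu hv => simp only [smul_add, hu, hv]

/-- The natural `B ⊗[A] A'`-module structure (written as `A' ⊗[A] B`, following Mathlib's
conventions) on the base change `M ⊗[A] A'` (written as `A' ⊗[A] M`). -/
noncomputable def Module.tensorProductBaseChange : Module (A' ⊗[A] B) (A' ⊗[A] M) :=
  letI : Module B (A' ⊗[A] M) := Module.tensorProductRight A A' B M
  haveI : IsScalarTower A B (A' ⊗[A] M) := tensorProductRight_isScalarTower A A' B M
  haveI : SMulCommClass A' B (A' ⊗[A] M) := tensorProductRight_smulCommClass A A' B M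
  TensorProduct.Algebra.module

/-!
If `f : A[x₁, …, xₙ] → B` makes `M` finitely presented, then so does its base change
`A'[x₁, …, xₙ] → A' ⊗[A] B` for `A' ⊗[A] M`: since `A'[x₁, …, xₙ]` is the pushout of
`A[x₁, …, xₙ]` along `A → A'`, the module `A' ⊗[A] M` is also the base change of `M` along
`A[x₁, …, xₙ] → A'[x₁, …, xₙ]`, and base change preserves finite presentation.
-/

lemma isBaseChange_of_isPushout {R S P P' N N' : Type*} [CommSemiring R] [CommSemiring S]
    [CommRing P] [CommRing P'] [Algebra R S] [Algebra R P] [Algebra R P'] [Algebra S P']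
    [Algebra P P'] [IsScalarTower R S P'] [IsScalarTower R P P'] [Algebra.IsPushout R S P P']
    [AddCommGroup N] [Module R N] [Module P N] [IsScalarTower R P N]
    [AddCommMonoid N'] [Module R N'] [Module S N'] [Module P N'] [Module P' N']
    [IsScalarTower R S N'] [IsScalarTower R P N'] [IsScalarTower S P' N'] [IsScalarTower P P' N']
    (g : N →ₗ[P] N') (hg : IsBaseChange S (g.restrictScalars R)) : IsBaseChange P' g := by
  let e : P' ⊗[P] N ≃ₗ[S] S ⊗[R] N := Algebra.IsPushout.cancelBaseChange R S P P' N
  let lift : P' ⊗[P] N →ₗ[P'] N' := (TensorProduct.isBaseChange P N P').lift g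
  have lift_one_tmul (x : N) : lift (1 ⊗ₜ x) = g x :=
    (TensorProduct.isBaseChange P N P').lift_eq g x
  have lift_comp_symm : lift.restrictScalars S ∘ₗ e.symm.toLinearMap = hg.equiv.toLinearMap := by
    ext x
    simp [e, lift_one_tmul, hg.equiv_tmul]
  have lift_bijective : Function.Bijective lift := by
    have lift_comp_symm_bijective : Function.Bijective (lift ∘ e.symm) := by
      rw [show lift ∘ e.symm = hg.equiv from congrArg DFunLike.coe lift_comp_symm]
      exact hg.equiv.bijective
    exact (e.symm.bijective.of_comp_iff _).mp lift_comp_symm_bijective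
  exact .of_equiv (.ofBijective lift lift_bijective) lift_one_tmul

lemma isScalarTower_compHom {R S T N : Type*} [CommSemiring R] [Semiring S] [Semiring T]
    [Algebra R S] [Algebra R T] [AddCommMonoid N] [Module R N] [Module T N] [IsScalarTower R T N]
    (f : S →ₐ[R] T) :
    letI : Module S N := Module.compHom N f.toRingHom
    IsScalarTower R S N := by
  let : Module S N := Module.compHom N f.toRingHom
  refine .of_algebraMap_smul fun r x => ?_
  change f (algebraMap R S r) • x = r • x
  rw [f.commutes, algebraMap_smul]

lemma tensorProductBaseChange_tmul_smul_tmul (a a' : A') (b : B) (m : M) :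
    letI : Module (A' ⊗[A] B) (A' ⊗[A] M) := Module.tensorProductBaseChange A A' B M
    (a ⊗ₜ[A] b) • (a' ⊗ₜ[A] m) = (a * a') ⊗ₜ[A] (b • m) := rfl

lemma tensorProductBaseChange_isScalarTower :
    letI : Module (A' ⊗[A] B) (A' ⊗[A] M) := Module.tensorProductBaseChange A A' B M
    IsScalarTower A' (A' ⊗[A] B) (A' ⊗[A] M) := by
  let : Module (A' ⊗[A] B) (A' ⊗[A] M) := Module.tensorProductBaseChange A A' B M
  refine .of_algebraMap_smul fun a x => ?_
  induction x with
  | zero => simp only [smul_zero]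
  | tmul a' m =>
    rw [Algebra.TensorProduct.algebraMap_apply, Algebra.algebraMap_self_apply,
      tensorProductBaseChange_tmul_smul_tmul, one_smul, smul_tmul', smul_eq_mul]
  | add x y hx hy => simp only [smul_add, hx, hy]

variable {A A' B M} in
lemma finitePresentation_baseChange_of_isPushout {P P' : Type*} [CommRing P] [CommRing P']
    [Algebra A P] [Algebra A P'] [Algebra A' P'] [Algebra P P'] [IsScalarTower A A' P']
    [IsScalarTower A P P'] [Algebra.IsPushout A A' P P'] (f : P →ₐ[A] B)
    (f' : P' →ₐ[A'] A' ⊗[A] B) (hf' : ∀ p, f' (algebraMap P P' p) = 1 ⊗ₜ f p)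
    (h : letI : Module P M := Module.compHom M f.toRingHom
      Module.FinitePresentation P M) :
    letI : Module (A' ⊗[A] B) (A' ⊗[A] M) := Module.tensorProductBaseChange A A' B M
    letI : Module P' (A' ⊗[A] M) := Module.compHom _ f'.toRingHom
    Module.FinitePresentation P' (A' ⊗[A] M) := by
  let : Module (A' ⊗[A] B) (A' ⊗[A] M) := Module.tensorProductBaseChange A A' B M
  have := tensorProductBaseChange_isScalarTower A A' B M
  let : Module P M := Module.compHom M f.toRingHom
  let : Module P' (A' ⊗[A] M) := Module.compHom _ f'.toRingHom
  let : Module P (A' ⊗[A] M) := Module.compHom _ (algebraMap P P')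
  have : IsScalarTower A P M := isScalarTower_compHom f
  have : IsScalarTower A' P' (A' ⊗[A] M) := isScalarTower_compHom f'
  have : IsScalarTower P P' (A' ⊗[A] M) := .of_algebraMap_smul fun _ _ => rfl
  have : IsScalarTower A P' (A' ⊗[A] M) := .to₁₃₄ A A' P' _
  have : IsScalarTower A P (A' ⊗[A] M) := .to₁₂₄ A P P' _
  let g : M →ₗ[P] A' ⊗[A] M :=
    { TensorProduct.mk A A' M 1 with
      map_smul' p m := by
        change (1 : A') ⊗ₜ[A] (f p • m) = f' (algebraMap P P' p) • ((1 : A') ⊗ₜ[A] m)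
        rw [hf', tensorProductBaseChange_tmul_smul_tmul, one_mul] }
  exact FinitePresentation.of_isBaseChange g
    (isBaseChange_of_isPushout g (TensorProduct.isBaseChange A M A'))

/-- Let `A` be a commutative ring, `B` an `A`-algebra, `M` a `B`-module, and
`A'` an `A`-algebra. If `M` is intrinsically of finite presentation over `A`, then the base
change `M ⊗[A] A'` (written here, following Mathlib's convention for base change, as
`A' ⊗[A] M`), viewed as a module over `B ⊗[A] A'` (written as `A' ⊗[A] B`), is intrinsically
of finite presentation over `A'`. -/
theorem Module.IntrinsicallyFinitePresentation.baseChange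
    (h : Module.IntrinsicallyFinitePresentation A B M) :
    letI : Module (A' ⊗[A] B) (A' ⊗[A] M) := Module.tensorProductBaseChange A A' B M
    Module.IntrinsicallyFinitePresentation A' (A' ⊗[A] B) (A' ⊗[A] M) := by
  obtain ⟨n, f, hM⟩ := h
  let : Algebra (MvPolynomial (Fin n) A) (MvPolynomial (Fin n) A') :=
    MvPolynomial.algebraMvPolynomial
  let f' : MvPolynomial (Fin n) A' →ₐ[A'] A' ⊗[A] B :=
    (Algebra.TensorProduct.map (.id A' A') f).comp
      (MvPolynomial.algebraTensorAlgEquiv A A').symm.toAlgHom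
  have hf' (p : MvPolynomial (Fin n) A) :
      f' (MvPolynomial.map (algebraMap A A') p) = 1 ⊗ₜ f p := by
    simp [f', MvPolynomial.algebraTensorAlgEquiv_symm_map]
  exact ⟨n, f', finitePresentation_baseChange_of_isPushout f f' hf' hM⟩

end BaseChange
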